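/- Let A and B be Büchi automata over a finite alphabet Σ. If A and B accept exactly the same ultimately periodic sequences (i.e., for all nonempty strings x, y over Σ, A accepts x·y^ω if and only if B accepts x·y^ω), then A and B accept exactly the same sequences. -/

import Mathlib

namespace Buechi

/-- Nonempty finite strings over `α`, given as a head together with a tail. -/
abbrev NStr (α : Type*) : Type _ := α × List α

/-- The list of symbols of a nonempty string. -/
def NStr.toList {α : Type*} (s : NStr α) : List α := s.1 :: s.2

/-- Büchi automata over alphabet `α`: a finite type of states, a transition
relation, initial states and accepting states. -/
structure BA (α : Type*) where
  Q : Type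
  fin : Fintype Q
  trans : Q → α → Q → Prop
  init : Q → Prop
  accept : Q → Prop

/-- Büchi acceptance: there is a run starting in an initial state, respecting the
transition relation, and visiting accepting states infinitely often. -/
def BA.Accepts {α : Type*} (M : BA α) (σ : ℕ → α) : Prop :=
  ∃ ρ : ℕ → M.Q, M.init (ρ 0) ∧ (∀ n, M.trans (ρ n) (σ n) (ρ (n + 1))) ∧
    ∀ k, ∃ n, k ≤ n ∧ M.accept (ρ n)

/-- `M.StepsL p x q`: there is a path on the list `x` from `p` to `q` whose
consecutive transitions are labelled by the successive symbols of `x`. -/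
def BA.StepsL {α : Type*} (M : BA α) : M.Q → List α → M.Q → Prop
  | p, [], q => p = q
  | p, a :: x, q => ∃ r, M.trans p a r ∧ M.StepsL r x q

/-- `M.StepsAccL p x q`: there is a path on `x` from `p` to `q` passing through an
accepting state before its last position. -/
def BA.StepsAccL {α : Type*} (M : BA α) : M.Q → List α → M.Q → Prop
  | _, [], _ => False
  | p, a :: x, q => ∃ r, M.trans p a r ∧ ((M.accept p ∧ M.StepsL r x q) ∨ M.StepsAccL r x q)

/-- `p ⇒x q` for a nonempty string `x`. -/
def BA.Steps {α : Type*} (M : BA α) (p : M.Q) (x : NStr α) (q : M.Q) : Prop :=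
  M.StepsL p x.toList q

/-- `p ⇒x! q` for a nonempty string `x`. -/
def BA.StepsAcc {α : Type*} (M : BA α) (p : M.Q) (x : NStr α) (q : M.Q) : Prop :=
  M.StepsAccL p x.toList q

/-- `(x, y)` is a match of `M`: there are states `p`, `q` with `p` initial,
`p ⇒x q` and `q ⇒y! q`. -/
def BA.IsMatch {α : Type*} (M : BA α) (x y : NStr α) : Prop :=
  ∃ p q, M.init p ∧ M.Steps p x q ∧ M.StepsAcc q y q

/-- The ultimately periodic sequence `x·y^ω = x y y y ⋯`. -/
def upSeq {α : Type*} (x y : NStr α) (n : ℕ) : α :=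
  if h : n < x.toList.length then x.toList.get ⟨n, h⟩
  else y.toList.get ⟨(n - x.toList.length) % y.toList.length,
    Nat.mod_lt _ (by simp [NStr.toList])⟩

/-
The proof avoids complementation. Colour a finite word by the pairs of states it connects, with and
without a visit to an accepting state, in both automata. Whether an automaton accepts an infinite
product of words depends only on the colours of the factors, and by Ramsey's theorem every sequence
is a product `u₀ u₁ u₂ ⋯` in which `u₁, u₂, …` have the same colour. Hence neither automaton
distinguishes it from `u₀ u₁ u₁ u₁ ⋯`.
-/

section

variable {α : Type*}

theorem exists_strictMono_forall_lt_eq {C : Type*} [Finite C] (col : ℕ → ℕ → C) :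
    ∃ (i : ℕ → ℕ) (c : C), StrictMono i ∧ ∀ m n, m < n → col (i m) (i n) = c := by
  let U : Ultrafilter ℕ := Filter.hyperfilter ℕ
  have exists_limit (f : ℕ → C) : ∃ c, ∀ᶠ n in U, f n = c :=
    U.eventually_exists_iff.1 (.of_forall fun n => ⟨f n, rfl⟩)
  choose limit h_limit using fun m => exists_limit (col m)
  obtain ⟨c, hc⟩ := exists_limit limit
  have extend (s : Finset ℕ) (hs : ∀ m ∈ s, limit m = c) :
      ∃ n, limit n = c ∧ ∀ m ∈ s, m < n ∧ col m n = c := by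
    have h_lt (m : ℕ) : ∀ᶠ n in U, m < n :=
      Nat.hyperfilter_le_atTop (Filter.eventually_gt_atTop m)
    refine (hc.and ((Filter.eventually_all_finset s).2 fun m hm => ?_)).exists
    exact (h_lt m).and (hs m hm ▸ h_limit m)
  obtain ⟨i, -, hi⟩ := exists_seq_of_forall_finset_exists _ _ extend
  exact ⟨i, c, fun m n h => (hi m n h).1, fun m n h => (hi m n h).2⟩

section Blocks

variable {i : ℕ → ℕ}

theorem exists_mem_Ico_succ (hi : StrictMono i) {n : ℕ} (hn : i 0 ≤ n) :
    ∃ k, n ∈ Set.Ico (i k) (i (k + 1)) := by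
  have h_cover : ⋃ k, Set.Ico (i k) (i (k + 1)) = Set.Ici (i 0) :=
    iUnion_Ico_map_succ_eq_Ici (fun k => hi.monotone k.zero_le)
      (Filter.not_bddAbove_of_tendsto_atTop hi.tendsto_atTop)
  exact Set.mem_iUnion.1 (h_cover ▸ Set.mem_Ici.2 hn)

theorem exists_glue {β : Type*} (hi : StrictMono i) (r : ℕ → ℕ → β)
    (hr : ∀ k, r k (i (k + 1)) = r (k + 1) (i (k + 1))) :
    ∃ ρ : ℕ → β, ∀ k, ∀ n ∈ Set.Icc (i k) (i (k + 1)), ρ n = r k n := by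
  choose! block h_block using fun n => exists_mem_Ico_succ (n := n) hi
  have block_eq {k n : ℕ} (hn : n ∈ Set.Ico (i k) (i (k + 1))) : block n = k := by
    have h_mem := h_block n ((hi.monotone k.zero_le).trans hn.1)
    have h₁ : block n < k + 1 := hi.lt_iff_lt.1 (h_mem.1.trans_lt hn.2)
    have h₂ : k < block n + 1 := hi.lt_iff_lt.1 (hn.1.trans_lt h_mem.2)
    omega
  refine ⟨fun n => r (block n) n, fun k n hn => ?_⟩
  obtain hlt | rfl := hn.2.lt_or_eq
  · simp only [block_eq ⟨hn.1, hlt⟩]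
  · simp only [block_eq ⟨le_rfl, hi (k + 1).lt_succ_self⟩, hr]

end Blocks

section Factors

variable {C : Type*} {σ : ℕ → α} {a b : ℕ}

/-- The finite word `σ a, …, σ (b - 1)`, empty if `b ≤ a`. -/
def factor (σ : ℕ → α) (a b : ℕ) : List α := (List.Ico a b).map σ

theorem factor_self (σ : ℕ → α) (a : ℕ) : factor σ a a = [] := by
  simp [factor]

theorem factor_eq_cons (σ : ℕ → α) (h : a < b) : factor σ a b = σ a :: factor σ (a + 1) b := by
  simp [factor, List.Ico.eq_cons h]

theorem factor_eq_nil_iff : factor σ a b = [] ↔ b ≤ a := by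
  simp [factor]

theorem factor_add_length_eq {l : List α} (h : ∀ n (hn : n < l.length), σ (a + n) = l[n]) :
    factor σ a (a + l.length) = l :=
  List.ext_getElem (by simp [factor]) fun n _ hn => by simp [factor, List.Ico, h n hn]

/-- `σ` is the infinite product `u 0 · u 1 · u 2 ⋯` of nonempty words. The sequence `i` of
positions at which the factors begin is strictly increasing, which makes the words nonempty. -/
def IsFactorization (σ : ℕ → α) (u : ℕ → List α) : Prop :=
  ∃ i : ℕ → ℕ, StrictMono i ∧ i 0 = 0 ∧ ∀ k, factor σ (i k) (i (k + 1)) = u k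

theorem IsFactorization.ne_nil {u : ℕ → List α} (h : IsFactorization σ u) (k : ℕ) : u k ≠ [] := by
  obtain ⟨i, hi, -, hu⟩ := h
  rw [← hu, Ne, factor_eq_nil_iff, not_le]
  exact hi k.lt_succ_self

theorem exists_isFactorization_forall_eq [Finite C] (σ : ℕ → α) (f : List α → C) :
    ∃ (u : ℕ → List α) (c : C), IsFactorization σ u ∧ ∀ k, f (u (k + 1)) = c := by
  obtain ⟨i, c, hi, hc⟩ := exists_strictMono_forall_lt_eq fun a b => f (factor σ a b)
  let cut : ℕ → ℕ
    | 0 => 0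
    | k + 1 => i (k + 1)
  have h_cut : StrictMono cut := strictMono_nat_of_lt_succ fun
    | 0 => (Nat.zero_le _).trans_lt (hi Nat.zero_lt_one)
    | k + 1 => hi (k + 1).lt_succ_self
  exact ⟨fun k => factor σ (cut k) (cut (k + 1)), c, ⟨cut, h_cut, rfl, fun _ => rfl⟩,
    fun k => hc _ _ (k + 1).lt_succ_self⟩

end Factors

section UltimatelyPeriodic

theorem NStr.exists_toList_eq {l : List α} (h : l ≠ []) : ∃ x : NStr α, x.toList = l :=
  ⟨(l.head h, l.tail), List.cons_head_tail h⟩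

theorem NStr.length_toList_pos (x : NStr α) : 0 < x.toList.length :=
  Nat.succ_pos _

theorem upSeq_of_lt (x y : NStr α) {n : ℕ} (hn : n < x.toList.length) :
    upSeq x y n = x.toList[n] := by
  simp [upSeq, hn]

theorem upSeq_length_add (x y : NStr α) (k : ℕ) {n : ℕ} (hn : n < y.toList.length) :
    upSeq x y (x.toList.length + k * y.toList.length + n) = y.toList[n] := by
  simp [upSeq, Nat.add_assoc, Nat.mod_eq_of_lt hn]

/-- The factors `x, y, y, y, …` of `upSeq x y`. -/
def upFactors (x y : NStr α) : ℕ → List α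
  | 0 => x.toList
  | _ + 1 => y.toList

theorem isFactorization_upSeq (x y : NStr α) : IsFactorization (upSeq x y) (upFactors x y) := by
  let cut : ℕ → ℕ
    | 0 => 0
    | k + 1 => x.toList.length + k * y.toList.length
  have cut_succ : ∀ k, cut (k + 1) = cut k + (upFactors x y k).length
    | 0 => by simp [cut, upFactors]
    | k + 1 => by simp only [cut, upFactors]; ring
  have length_pos : ∀ k, 0 < (upFactors x y k).length
    | 0 => x.length_toList_pos
    | _ + 1 => y.length_toList_pos
  refine ⟨cut, strictMono_nat_of_lt_succ fun k => ?_, rfl, fun k => ?_⟩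
  · rw [cut_succ]
    exact Nat.lt_add_of_pos_right (length_pos k)
  · rw [cut_succ]
    refine factor_add_length_eq fun n hn => ?_
    cases k with
    | zero => rw [Nat.zero_add]; exact upSeq_of_lt x y hn
    | succ k => exact upSeq_length_add x y k hn

end UltimatelyPeriodic

namespace BA

variable {M : BA α} {σ τ : ℕ → α} {u v : ℕ → List α} {ρ : ℕ → M.Q} {p q : M.Q} {a b : ℕ}

instance finite_Q (M : BA α) : Finite M.Q := @Finite.of_fintype _ M.fin

/-- The states `ρ a, …, ρ b` form a path on the word `σ a, …, σ (b - 1)`. Positions are absolute,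
so that paths on consecutive factors of `σ` can be glued without shifting them. -/
def IsPathOn (M : BA α) (σ : ℕ → α) (ρ : ℕ → M.Q) (a b : ℕ) : Prop :=
  ∀ n ∈ Set.Ico a b, M.trans (ρ n) (σ n) (ρ (n + 1))

theorem IsPathOn.update (h : M.IsPathOn σ ρ (a + 1) b) (hp : M.trans p (σ a) (ρ (a + 1))) :
    M.IsPathOn σ (Function.update ρ a p) a b := by
  rintro n ⟨han, hnb⟩
  obtain rfl | hlt := han.eq_or_lt
  · simpa using hp
  · simpa [hlt.ne', (hlt.trans n.lt_succ_self).ne'] using h n ⟨hlt, hnb⟩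

theorem IsPathOn.mono {c d : ℕ} (h : M.IsPathOn σ ρ a b) (hac : a ≤ c) (hdb : d ≤ b) :
    M.IsPathOn σ ρ c d :=
  fun n hn => h n (Set.Ico_subset_Ico hac hdb hn)

theorem stepsL_factor_iff (hab : a ≤ b) :
    M.StepsL p (factor σ a b) q ↔ ∃ ρ, ρ a = p ∧ ρ b = q ∧ M.IsPathOn σ ρ a b := by
  induction hab using Nat.decreasingInduction generalizing p with
  | self =>
    rw [factor_self]
    constructor
    · rintro rfl
      exact ⟨fun _ => p, rfl, rfl, fun n hn => absurd hn (by simp)⟩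
    · rintro ⟨ρ, rfl, rfl, -⟩
      rfl
  | of_succ a hab ih =>
    simp only [factor_eq_cons σ hab, StepsL, ih]
    constructor
    · rintro ⟨_, hp, ρ, rfl, rfl, hρ⟩
      exact ⟨Function.update ρ a p, by simp, by simp [hab.ne'], hρ.update hp⟩
    · rintro ⟨ρ, rfl, rfl, hρ⟩
      exact ⟨_, hρ a ⟨le_rfl, hab⟩, ρ, rfl, rfl, hρ.mono a.le_succ le_rfl⟩

theorem stepsAccL_factor_iff (hab : a ≤ b) :
    M.StepsAccL p (factor σ a b) q ↔
      ∃ ρ, ρ a = p ∧ ρ b = q ∧ M.IsPathOn σ ρ a b ∧ ∃ n ∈ Set.Ico a b, M.accept (ρ n) := by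
  induction hab using Nat.decreasingInduction generalizing p with
  | self => simp [factor_self, StepsAccL]
  | of_succ a hab ih =>
    simp only [factor_eq_cons σ hab, StepsAccL, stepsL_factor_iff (Nat.succ_le_of_lt hab), ih]
    constructor
    · rintro ⟨_, hp, ⟨h_acc, ρ, rfl, rfl, hρ⟩ | ⟨ρ, rfl, rfl, hρ, n, hn, h_acc⟩⟩
      · exact ⟨Function.update ρ a p, by simp, by simp [hab.ne'], hρ.update hp,
          a, ⟨le_rfl, hab⟩, by simpa using h_acc⟩
      · have han : a < n := hn.1
        exact ⟨Function.update ρ a p, by simp, by simp [hab.ne'], hρ.update hp,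
          n, ⟨han.le, hn.2⟩, by simpa [han.ne'] using h_acc⟩
    · rintro ⟨ρ, rfl, rfl, hρ, n, hn, h_acc⟩
      have h_tail : M.IsPathOn σ ρ (a + 1) b := hρ.mono a.le_succ le_rfl
      refine ⟨_, hρ a ⟨le_rfl, hab⟩, ?_⟩
      obtain rfl | han := hn.1.eq_or_lt
      · exact .inl ⟨h_acc, ρ, rfl, rfl, h_tail⟩
      · exact .inr ⟨ρ, rfl, rfl, h_tail, n, ⟨han, hn.2⟩, h_acc⟩

theorem exists_isPathOn_of_stepsL (hab : a ≤ b) (h : M.StepsL p (factor σ a b) q) :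
    ∃ ρ, ρ a = p ∧ ρ b = q ∧ M.IsPathOn σ ρ a b ∧
      (M.StepsAccL p (factor σ a b) q → ∃ n ∈ Set.Ico a b, M.accept (ρ n)) := by
  by_cases h_acc : M.StepsAccL p (factor σ a b) q
  · obtain ⟨ρ, ha, hb, hρ, hn⟩ := (stepsAccL_factor_iff hab).1 h_acc
    exact ⟨ρ, ha, hb, hρ, fun _ => hn⟩
  · obtain ⟨ρ, ha, hb, hρ⟩ := (stepsL_factor_iff hab).1 h
    exact ⟨ρ, ha, hb, hρ, fun h => absurd h h_acc⟩

/-- `s` is a run of `M` on the infinite product `u 0 · u 1 · u 2 ⋯` that records only the states at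
the ends of the factors and passes through an accepting state within infinitely many factors. -/
def IsAcceptingFactorRun (M : BA α) (u : ℕ → List α) (s : ℕ → M.Q) : Prop :=
  M.init (s 0) ∧ (∀ k, M.StepsL (s k) (u k) (s (k + 1))) ∧
    ∀ k, ∃ l, k ≤ l ∧ M.StepsAccL (s l) (u l) (s (l + 1))

theorem Accepts.exists_isAcceptingFactorRun (h : M.Accepts σ) (hu : IsFactorization σ u) :
    ∃ s, M.IsAcceptingFactorRun u s := by
  obtain ⟨ρ, h_init, h_trans, h_acc⟩ := h
  obtain ⟨i, hi, h0, hu⟩ := hu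
  have h_le (k : ℕ) : i k ≤ i (k + 1) := hi.monotone k.le_succ
  have h_path (a b : ℕ) : M.IsPathOn σ ρ a b := fun n _ => h_trans n
  refine ⟨ρ ∘ i, by simpa [h0] using h_init, fun k => ?_, fun k => ?_⟩
  · rw [← hu]
    exact (stepsL_factor_iff (h_le k)).2 ⟨ρ, rfl, rfl, h_path _ _⟩
  · obtain ⟨n, hkn, hn⟩ := h_acc (i k)
    obtain ⟨l, hl⟩ := exists_mem_Ico_succ hi (h0 ▸ n.zero_le)
    have hkl : k < l + 1 := hi.lt_iff_lt.1 (hkn.trans_lt hl.2)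
    refine ⟨l, Nat.le_of_lt_succ hkl, ?_⟩
    rw [← hu]
    exact (stepsAccL_factor_iff (h_le l)).2 ⟨ρ, rfl, rfl, h_path _ _, n, hl, hn⟩

theorem IsAcceptingFactorRun.accepts {s : ℕ → M.Q} (h : M.IsAcceptingFactorRun u s)
    (hu : IsFactorization σ u) : M.Accepts σ := by
  obtain ⟨h_init, h_steps, h_acc⟩ := h
  obtain ⟨i, hi, h0, hu⟩ := hu
  have h_le (k : ℕ) : i k ≤ i (k + 1) := hi.monotone k.le_succ
  simp only [← hu] at h_steps h_acc
  choose r hr_left hr_right hr_path hr_acc using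
    fun k => exists_isPathOn_of_stepsL (h_le k) (h_steps k)
  obtain ⟨ρ, hρ⟩ := exists_glue hi r fun k => (hr_right k).trans (hr_left (k + 1)).symm
  refine ⟨ρ, ?_, fun n => ?_, fun k => ?_⟩
  · have h_start : ρ (i 0) = s 0 := (hρ 0 _ ⟨le_rfl, h_le 0⟩).trans (hr_left 0)
    rwa [← h0, h_start]
  · obtain ⟨k, hk⟩ := exists_mem_Ico_succ hi (h0 ▸ n.zero_le)
    rw [hρ k n ⟨hk.1, hk.2.le⟩, hρ k (n + 1) ⟨hk.1.trans n.le_succ, hk.2⟩]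
    exact hr_path k n hk
  · obtain ⟨l, hkl, hl⟩ := h_acc k
    obtain ⟨n, hn, h_accept⟩ := hr_acc l hl
    refine ⟨n, hkl.trans (hi.le_apply.trans hn.1), ?_⟩
    rwa [hρ l n ⟨hn.1, hn.2.le⟩]

theorem accepts_iff_exists_isAcceptingFactorRun (hu : IsFactorization σ u) :
    M.Accepts σ ↔ ∃ s, M.IsAcceptingFactorRun u s :=
  ⟨fun h => h.exists_isAcceptingFactorRun hu, fun ⟨_, hs⟩ => hs.accepts hu⟩

/-- The colour of a finite word: the relations between states given by its paths and by its paths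
through an accepting state. Words of equal profile are interchangeable as factors. -/
def profile (M : BA α) (x : List α) : (M.Q → M.Q → Prop) × (M.Q → M.Q → Prop) :=
  (fun p q => M.StepsL p x q, fun p q => M.StepsAccL p x q)

theorem accepts_congr (hu : IsFactorization σ u) (hv : IsFactorization τ v)
    (h : ∀ k, M.profile (u k) = M.profile (v k)) : M.Accepts σ ↔ M.Accepts τ := by
  have h_steps (k p q) : M.StepsL p (u k) q = M.StepsL p (v k) q :=
    congrFun₂ (congrArg Prod.fst (h k)) p q
  have h_stepsAcc (k p q) : M.StepsAccL p (u k) q = M.StepsAccL p (v k) q :=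
    congrFun₂ (congrArg Prod.snd (h k)) p q
  simp only [accepts_iff_exists_isAcceptingFactorRun hu,
    accepts_iff_exists_isAcceptingFactorRun hv, IsAcceptingFactorRun, h_steps, h_stepsAcc]

end BA

theorem exists_upSeq_forall_accepts_iff {ι : Type*} [Finite ι] (M : ι → BA α) (σ : ℕ → α) :
    ∃ x y : NStr α, ∀ j, (M j).Accepts σ ↔ (M j).Accepts (upSeq x y) := by
  obtain ⟨u, c, hu, hc⟩ := exists_isFactorization_forall_eq σ fun l j => (M j).profile l
  obtain ⟨x, hx⟩ := NStr.exists_toList_eq (hu.ne_nil 0)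
  obtain ⟨y, hy⟩ := NStr.exists_toList_eq (hu.ne_nil 1)
  refine ⟨x, y, fun j => BA.accepts_congr hu (isFactorization_upSeq x y) fun k => ?_⟩
  cases k with
  | zero => rw [upFactors, hx]
  | succ k => rw [upFactors, hy]; exact congrFun ((hc k).trans (hc 0).symm) j

end

theorem up_equiv_implies_equiv_general {α : Type*} (A B : BA α)
    (h : ∀ x y : NStr α, A.Accepts (upSeq x y) → B.Accepts (upSeq x y)) :
    ∀ σ : ℕ → α, A.Accepts σ → B.Accepts σ := by
  intro σ hA
  obtain ⟨x, y, hxy⟩ := exists_upSeq_forall_accepts_iff ![A, B] σ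
  exact (hxy 1).2 (h x y ((hxy 0).1 hA))

/-- If two Büchi automata accept the same ultimately periodic sequences, then
they accept the same sequences. -/
theorem up_equiv_implies_equiv {α : Type*} [Fintype α] (A B : BA α)
    (h : ∀ x y : NStr α, A.Accepts (upSeq x y) ↔ B.Accepts (upSeq x y)) :
    ∀ σ : ℕ → α, A.Accepts σ ↔ B.Accepts σ := by
  exact fun σ => ⟨up_equiv_implies_equiv_general A B (fun x y => (h x y).1) σ,
    up_equiv_implies_equiv_general B A (fun x y => (h x y).2) σ⟩

end Buechi
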